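/- Let X be a real Banach space and let D ⊆ X* be an r-norming linear subspace of the dual (r ≥ 1). Then X has a commutative r-projectional skeleton s = {P_s}_{s∈Γ} with D(s) = D if and only if X has a simple commutative r-projectional skeleton s' = {P_F}_{F∈𝓕} with D(s') = D. -/

import Mathlib

/-!
In a simple skeleton the rich family itself, ordered by inclusion, is an index set, so one
implication is direct.

For the other one, the point is that commuting projections are determined by their ranges: if
`range P_s ⊆ range P_t` then `P_t P_s = P_s`, hence also `P_s P_t = P_s`. So it is enough to find a
rich family all of whose members are ranges of some `P_t`. The set of all ranges need not be closed
under closures of increasing unions, since increasing ranges need not come from increasing indices,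
and it has to be thinned out by means of a continuous selection of indices.

By paracompactness, for each `n` there is a locally finite open cover `(u n a)_{a ∈ X}` with
`u n a ⊆ ball a (1 / (n + 1))`. Let `hitSet u F` be the set of all `(n, a)` such that `u n a`
meets `F`. It is countable for separable `F`, and since the `u n a` are open, it commutes with
closures of increasing unions. As `Γ` is directed, there is a monotone `σ : Finset (ℕ × X) → Γ`
such that `a ∈ range P_{σ B}` whenever `(n, a) ∈ B`. Put
`hull P σ A = closure ⋃ {range P_{σ B} : B ⊆ A finite}`. For countable `A` this is the range of
some `P_t` (`exists_range_eq_hull`), and `F ⊆ hull P σ (hitSet u F)` because the points `a` with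
`(n, a) ∈ hitSet u F` approximate every point of `F`. The family of separable `F` with
`F = hull P σ (hitSet u F)` is rich (`isRichFamily_hullFamily`): a separable subspace is enlarged to
a member by iterating `F ↦ hull P σ (hitSet u F)` countably many times, and stability under
increasing unions comes from the continuity of `hitSet u` and `hull P σ`.
-/

open Set TopologicalSpace Filter Metric

universe u

section Defs

variable {X : Type*} [NormedAddCommGroup X] [NormedSpace ℝ X]

/-- A projectional skeleton in a Banach space `X`: a family of bounded linear projections
indexed by an up-directed partially ordered set `Γ` such that each range is separable,
the ranges cover `X`, projections are compatible along `≤`, and for every strictly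
increasing sequence the supremum exists and its range is the closure of the union of
the ranges. -/
structure IsProjSkeleton {Γ : Type*} [PartialOrder Γ] (P : Γ → X →L[ℝ] X) : Prop where
  directed : ∀ s t : Γ, ∃ u, s ≤ u ∧ t ≤ u
  separable_range : ∀ s, TopologicalSpace.IsSeparable (Set.range (P s))
  covers : ∀ x : X, ∃ s, x ∈ Set.range (P s)
  comp_of_le : ∀ s t : Γ, s ≤ t → (P s).comp (P t) = P s ∧ (P t).comp (P s) = P s
  lub_of_strictMono : ∀ s : ℕ → Γ, StrictMono s → ∃ t : Γ, IsLUB (Set.range s) t ∧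
    Set.range (P t) = closure (⋃ n, Set.range (P (s n)))

/-- `D(𝔰) = ⋃_{s ∈ Γ} P_s^*(X^*)`, the union of the ranges of the adjoints of the
projections (the adjoint of `P_s` sends `f` to `f ∘ P_s`). -/
def skeletonDualSet {Γ : Type*} (P : Γ → X →L[ℝ] X) : Set (X →L[ℝ] ℝ) :=
  ⋃ s : Γ, Set.range fun f : X →L[ℝ] ℝ => f.comp (P s)

/-- A rich family of separable subspaces of `X`: a family of closed separable subspaces
such that every closed separable subspace is contained in a member, and the closure of
the union of any increasing sequence of members is a member. -/
def IsRichFamily (𝓕 : Set (Submodule ℝ X)) : Prop :=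
  (∀ F ∈ 𝓕, IsClosed (F : Set X) ∧ TopologicalSpace.IsSeparable (F : Set X)) ∧
  (∀ S : Submodule ℝ X, IsClosed (S : Set X) → TopologicalSpace.IsSeparable (S : Set X) →
    ∃ F ∈ 𝓕, S ≤ F) ∧
  ∀ F : ℕ → Submodule ℝ X, (∀ n, F n ∈ 𝓕) → Monotone F →
    (⨆ n, F n).topologicalClosure ∈ 𝓕

/-- A simple projectional skeleton: a family of bounded linear projections indexed by a
rich family `𝓕` (ordered by inclusion), with `P_F(X) = F` and compatibility along
inclusion. -/
structure IsSimpleProjSkeleton (𝓕 : Set (Submodule ℝ X))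
    (P : Submodule ℝ X → X →L[ℝ] X) : Prop where
  rich : IsRichFamily 𝓕
  range_eq : ∀ F ∈ 𝓕, Set.range (P F) = (F : Set X)
  comp_of_le : ∀ E ∈ 𝓕, ∀ F ∈ 𝓕, E ≤ F →
    (P E).comp (P F) = P E ∧ (P F).comp (P E) = P E

/-- `D(𝔰')` for a simple projectional skeleton. -/
def simpleDualSet (𝓕 : Set (Submodule ℝ X)) (P : Submodule ℝ X → X →L[ℝ] X) :
    Set (X →L[ℝ] ℝ) :=
  ⋃ F ∈ 𝓕, Set.range fun f : X →L[ℝ] ℝ => f.comp (P F)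

/-- A subspace `D ⊆ X^*` is `r`-norming if
`‖x‖ ≤ r ⬝ sup {|f x| : f ∈ D, ‖f‖ ≤ 1}` for every `x ∈ X`. -/
def IsNormingSubspace (r : ℝ) (D : Submodule ℝ (X →L[ℝ] ℝ)) : Prop :=
  ∀ x : X, ‖x‖ ≤ r * sSup ((fun f : X →L[ℝ] ℝ => |f x|) '' {f | f ∈ D ∧ ‖f‖ ≤ 1})

end Defs

section Aux

variable {X : Type*} [NormedAddCommGroup X] [NormedSpace ℝ X]

/-! ### Hulls of index sets -/

section Hull

variable {Γ : Type*} {P : Γ → X →L[ℝ] X}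

/-- The closure of the union of the ranges of `P (σ B)` over the finite subsets `B` of `A`. -/
def hull {I : Type*} (P : Γ → X →L[ℝ] X) (σ : Finset I → Γ) (A : Set I) : Set X :=
  closure (⋃ B : {B : Finset I // (B : Set I) ⊆ A}, Set.range (P (σ B)))

lemma range_subset_hull {I : Type*} {σ : Finset I → Γ} {A : Set I} {B : Finset I}
    (hB : (B : Set I) ⊆ A) : Set.range (P (σ B)) ⊆ hull P σ A :=
  (subset_iUnion (fun B : {B : Finset I // (B : Set I) ⊆ A} => Set.range (P (σ B)))
    ⟨B, hB⟩).trans subset_closure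

lemma hull_subset {I : Type*} {σ : Finset I → Γ} {A : Set I} {F : Set X} (hF : IsClosed F)
    (h : ∀ B : Finset I, (B : Set I) ⊆ A → Set.range (P (σ B)) ⊆ F) : hull P σ A ⊆ F :=
  closure_minimal (iUnion_subset fun B => h B.1 B.2) hF

end Hull

/-! ### Consequences of the skeleton axioms -/

section Skeleton

variable {Γ : Type*} [PartialOrder Γ] {P : Γ → X →L[ℝ] X}

lemma IsProjSkeleton.mem_range_iff (h : IsProjSkeleton P) (s : Γ) (x : X) :
    x ∈ Set.range (P s) ↔ P s x = x := by
  constructor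
  · rintro ⟨y, rfl⟩
    exact DFunLike.congr_fun (h.comp_of_le s s le_rfl).1 y
  · intro hx
    exact ⟨x, hx⟩

lemma IsProjSkeleton.isClosed_range (h : IsProjSkeleton P) (s : Γ) :
    IsClosed (Set.range (P s)) := by
  have : Set.range (P s) = {x | P s x = x} := by
    ext x
    exact h.mem_range_iff s x
  rw [this]
  exact isClosed_eq (P s).continuous continuous_id

lemma IsProjSkeleton.range_mono (h : IsProjSkeleton P) {s t : Γ} (hst : s ≤ t) :
    Set.range (P s) ⊆ Set.range (P t) := by
  rintro _ ⟨y, rfl⟩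
  exact ⟨P s y, DFunLike.congr_fun (h.comp_of_le s t hst).2 y⟩

/-- For commuting projections, inclusion of ranges gives both composition identities. -/
lemma IsProjSkeleton.comp_of_range_subset (h : IsProjSkeleton P)
    (hc : ∀ s t : Γ, (P s).comp (P t) = (P t).comp (P s)) {s t : Γ}
    (hst : Set.range (P s) ⊆ Set.range (P t)) :
    (P s).comp (P t) = P s ∧ (P t).comp (P s) = P s := by
  have key : (P t).comp (P s) = P s := by
    ext x
    exact (h.mem_range_iff t _).1 (hst ⟨x, rfl⟩)
  exact ⟨(hc s t).trans key, key⟩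

/-- The sequence axiom of a skeleton extends from strictly increasing to increasing sequences:
such a sequence is either eventually constant or has a strictly increasing subsequence. -/
lemma IsProjSkeleton.exists_range_eq_of_monotone (h : IsProjSkeleton P) {s : ℕ → Γ}
    (hs : Monotone s) :
    ∃ t, Set.range (P t) = closure (⋃ n, Set.range (P (s n))) := by
  by_cases hev : ∃ N, ∀ n, s n ≤ s N
  · obtain ⟨N, hN⟩ := hev
    refine ⟨s N, subset_antisymm ?_ ?_⟩
    · exact (subset_iUnion (fun n => Set.range (P (s n))) N).trans subset_closure
    · exact closure_minimal (iUnion_subset fun n => h.range_mono (hN n)) (h.isClosed_range _)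
  · push Not at hev
    have hlt : ∀ N, ∃ n, N < n ∧ s N < s n := by
      intro N
      obtain ⟨n, hn⟩ := hev N
      have hNn : N < n := by
        by_contra hle
        exact hn (hs (not_lt.1 hle))
      exact ⟨n, hNn, lt_of_le_not_ge (hs hNn.le) hn⟩
    choose g hg1 hg2 using hlt
    have hφ : StrictMono fun k => g^[k] 0 := strictMono_nat_of_lt_succ fun k => by
      simp only [Function.iterate_succ_apply']
      exact hg1 _
    have hsφ : StrictMono fun k => s (g^[k] 0) := strictMono_nat_of_lt_succ fun k => by
      simp only [Function.iterate_succ_apply']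
      exact hg2 _
    obtain ⟨t, -, ht⟩ := h.lub_of_strictMono _ hsφ
    refine ⟨t, ht.trans (congrArg closure (subset_antisymm ?_ ?_))⟩
    · exact iUnion_subset fun k => subset_iUnion (fun n => Set.range (P (s n))) (g^[k] 0)
    · exact iUnion_subset fun n => (h.range_mono (hs (hφ.id_le n))).trans
        (subset_iUnion (fun k => Set.range (P (s (g^[k] 0)))) n)

/-- A directed index set admits a monotone assignment of indices to finite sets which respects a
prescribed lower bound `m i` for each element `i`. -/
lemma exists_monotone_finset {Γ I : Type*} [PartialOrder Γ] [Nonempty Γ]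
    (hdir : ∀ s t : Γ, ∃ u, s ≤ u ∧ t ≤ u) (m : I → Γ) :
    ∃ σ : Finset I → Γ, Monotone σ ∧ ∀ B, ∀ i ∈ B, m i ≤ σ B := by
  classical
  have : IsDirectedOrder Γ := ⟨hdir⟩
  have hub : ∀ T : Finset Γ, ∃ M, ∀ t ∈ T, t ≤ M := fun T => Finset.exists_le T
  choose ub hub using hub
  -- The index of `B` dominates the indices of all proper subsets of `B` and all `m i`, `i ∈ B`.
  let σ : Finset I → Γ := fun B => Finset.strongInduction (p := fun _ => Γ)
    (fun B ih => ub (B.ssubsets.attach.image (fun C => ih C.1 (Finset.mem_ssubsets.1 C.2))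
      ∪ B.image m)) B
  have hσ : ∀ B, σ B = ub (B.ssubsets.attach.image (fun C => σ C.1) ∪ B.image m) := by
    intro B
    exact Finset.strongInduction_eq _ B
  refine ⟨σ, ?_, ?_⟩
  · intro C B hCB
    rcases eq_or_ssubset_of_subset hCB with rfl | hss
    · exact le_rfl
    · rw [hσ B]
      apply hub
      refine Finset.mem_union_left _ (Finset.mem_image.2 ?_)
      exact ⟨⟨C, Finset.mem_ssubsets.2 hss⟩, Finset.mem_attach _ _, rfl⟩
  · intro B i hi
    rw [hσ B]
    exact hub _ _ (Finset.mem_union_right _ (Finset.mem_image_of_mem m hi))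

/-- The finite subsets of a countable set contain a cofinal increasing sequence, so the hull of a
countable set is the range of one of the projections. -/
lemma IsProjSkeleton.exists_range_eq_hull (h : IsProjSkeleton P) {I : Type*}
    {σ : Finset I → Γ} (hσ : Monotone σ) {A : Set I} (hA : A.Countable) :
    ∃ t, Set.range (P t) = hull P σ A := by
  classical
  obtain ⟨B, hBm, hBA, hcof⟩ : ∃ B : ℕ → Finset I, Monotone B ∧ (∀ n, (B n : Set I) ⊆ A) ∧
      ∀ C : Finset I, (C : Set I) ⊆ A → ∃ n, C ⊆ B n := by
    rcases A.eq_empty_or_nonempty with rfl | hne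
    · refine ⟨fun _ => ∅, monotone_const, by simp, fun C hC => ⟨0, ?_⟩⟩
      simpa using hC
    · obtain ⟨f, rfl⟩ := hA.exists_eq_range hne
      have hm : Monotone fun n => (Finset.range n).image f := fun m n hmn =>
        Finset.image_subset_image (Finset.range_mono hmn)
      refine ⟨_, hm, ?_, ?_⟩
      · intro n x hx
        simp only [Finset.coe_image] at hx
        exact image_subset_range _ _ hx
      · intro C hC
        obtain ⟨T, -, hT⟩ := Finset.subset_set_image_iff.1 (image_univ (f := f) ▸ hC)
        obtain ⟨n, hn⟩ := T.exists_nat_subset_range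
        exact ⟨n, hT ▸ Finset.image_subset_image hn⟩
  obtain ⟨t, ht⟩ := h.exists_range_eq_of_monotone (hσ.comp hBm)
  refine ⟨t, ht.trans (subset_antisymm ?_ ?_)⟩
  · exact closure_minimal (iUnion_subset fun n => range_subset_hull (hBA n)) isClosed_closure
  · refine hull_subset isClosed_closure fun C hC => ?_
    obtain ⟨n, hn⟩ := hcof C hC
    exact ((h.range_mono (hσ hn)).trans
      (subset_iUnion (fun n => Set.range (P ((σ ∘ B) n))) n)).trans subset_closure

end Skeleton

/-! ### Open covers and closed subspaces -/

lemma exists_locallyFinite_covers (X : Type*) [PseudoMetricSpace X] :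
    ∃ u : ℕ → X → Set X, (∀ n a, IsOpen (u n a)) ∧ (∀ n, ⋃ a, u n a = univ) ∧
      (∀ n, LocallyFinite (u n)) ∧ ∀ n a, u n a ⊆ ball a (1 / ((n : ℝ) + 1)) := by
  have : ∀ n : ℕ, ∃ v : X → Set X, (∀ a, IsOpen (v a)) ∧ ⋃ a, v a = univ ∧
      LocallyFinite v ∧ ∀ a, v a ⊆ ball a (1 / ((n : ℝ) + 1)) := by
    intro n
    refine precise_refinement _ (fun a => isOpen_ball) (eq_univ_of_forall fun a => ?_)
    exact mem_iUnion.2 ⟨a, mem_ball_self Nat.one_div_pos_of_nat⟩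
  choose u h1 h2 h3 h4 using this
  exact ⟨u, h1, h2, h3, h4⟩

/-- The indices of those members of the covers `u n` that meet `F`. -/
def hitSet (u : ℕ → X → Set X) (F : Set X) : Set (ℕ × X) :=
  {i | (u i.1 i.2 ∩ F).Nonempty}

lemma hitSet_countable {X : Type*} [PseudoMetricSpace X] {u : ℕ → X → Set X} (ho : ∀ n a, IsOpen (u n a))
    (hf : ∀ n, LocallyFinite (u n)) {F : Set X} (hF : IsSeparable F) :
    (hitSet u F).Countable := by
  obtain ⟨c, hc, hFc⟩ := hF
  have hcount : (⋃ x ∈ c, ⋃ n : ℕ, Prod.mk n '' {a | x ∈ u n a}).Countable :=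
    hc.biUnion fun x _ => countable_iUnion fun n =>
      (((hf n).point_finite x).image _).countable
  refine hcount.mono ?_
  rintro ⟨n, a⟩ ⟨y, hy, hyF⟩
  obtain ⟨x, hx, hxc⟩ := mem_closure_iff.1 (hFc hyF) _ (ho n a) hy
  simp only [mem_iUnion]
  exact ⟨x, hxc, n, a, hx, rfl⟩

lemma coe_closure_iSup {F : ℕ → Submodule ℝ X} (hF : Monotone F) :
    ((⨆ n, F n).topologicalClosure : Set X) = closure (⋃ n, (F n : Set X)) := by
  rw [Submodule.topologicalClosure_coe, Submodule.coe_iSup_of_directed _ hF.directed_le]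

/-- Since the covers are open, a finite set of indices hit by the closure of an increasing union
is already hit by one of its terms. -/
lemma exists_subset_hitSet {u : ℕ → X → Set X} (ho : ∀ n a, IsOpen (u n a))
    {F : ℕ → Submodule ℝ X} (hF : Monotone F) {B : Finset (ℕ × X)}
    (hB : (B : Set (ℕ × X)) ⊆ hitSet u ((⨆ n, F n).topologicalClosure : Submodule ℝ X)) :
    ∃ n, (B : Set (ℕ × X)) ⊆ hitSet u (F n) := by
  have hmono : Monotone fun n => hitSet u (F n : Set X) := fun m n hmn i hi =>
    hi.mono (inter_subset_inter_right _ (hF hmn))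
  refine hmono.directed_le.exists_mem_subset_of_finset_subset_biUnion ?_
  intro i hi
  obtain ⟨y, hy, hyF⟩ := hB hi
  rw [coe_closure_iSup hF] at hyF
  obtain ⟨x, hx, hxF⟩ := mem_closure_iff.1 hyF _ (ho i.1 i.2) hy
  obtain ⟨n, hn⟩ := mem_iUnion.1 hxF
  exact mem_iUnion.2 ⟨n, x, hx, hn⟩

/-! ### The rich family of ranges -/

section Rich

variable {Γ : Type*} [PartialOrder Γ] {P : Γ → X →L[ℝ] X}

/-- The separable subspaces `F` that are the hull of the set of indices they hit. -/
def hullFamily (P : Γ → X →L[ℝ] X) (σ : Finset (ℕ × X) → Γ) (u : ℕ → X → Set X) :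
    Set (Submodule ℝ X) :=
  {F | IsSeparable (F : Set X) ∧ hull P σ (hitSet u F) = (F : Set X)}

/-- Every point of `F` is approximated by the centres of the sets in the covers that contain it,
and these centres lie in the hull. -/
lemma subset_hull_hitSet {Γ : Type*} {P : Γ → X →L[ℝ] X} {σ : Finset (ℕ × X) → Γ} {u : ℕ → X → Set X}
    (hu : ∀ n, ⋃ a, u n a = univ) (hb : ∀ n a, u n a ⊆ ball a (1 / ((n : ℝ) + 1)))
    (hσ : ∀ B : Finset (ℕ × X), ∀ i ∈ B, i.2 ∈ Set.range (P (σ B))) (F : Set X) :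
    F ⊆ hull P σ (hitSet u F) := by
  intro x hx
  have hcl : IsClosed (hull P σ (hitSet u F)) := isClosed_closure
  rw [← hcl.closure_eq]
  refine Metric.mem_closure_iff.2 fun ε hε => ?_
  obtain ⟨n, hn⟩ := exists_nat_one_div_lt hε
  obtain ⟨a, ha⟩ := mem_iUnion.1 ((hu n).symm ▸ mem_univ x : x ∈ ⋃ a, u n a)
  have hsub : (({(n, a)} : Finset (ℕ × X)) : Set (ℕ × X)) ⊆ hitSet u F := by
    simp only [Finset.coe_singleton, singleton_subset_iff]
    exact ⟨x, ha, hx⟩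
  exact ⟨a, range_subset_hull hsub (hσ _ (n, a) (Finset.mem_singleton_self _)),
    (hb n a ha).trans hn⟩

/-- If each term of an increasing sequence of separable subspaces contains the hull of the
preceding one, then the closure of the union lies in `hullFamily`. -/
lemma closure_iSup_mem_hullFamily {σ : Finset (ℕ × X) → Γ} {u : ℕ → X → Set X}
    (ho : ∀ n a, IsOpen (u n a)) (hu : ∀ n, ⋃ a, u n a = univ)
    (hb : ∀ n a, u n a ⊆ ball a (1 / ((n : ℝ) + 1)))
    (hσ : ∀ B : Finset (ℕ × X), ∀ i ∈ B, i.2 ∈ Set.range (P (σ B)))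
    {F : ℕ → Submodule ℝ X} (hF : Monotone F) (hsep : ∀ n, IsSeparable (F n : Set X))
    (hstep : ∀ n, hull P σ (hitSet u (F n)) ⊆ F (n + 1)) :
    (⨆ n, F n).topologicalClosure ∈ hullFamily P σ u := by
  refine ⟨?_, subset_antisymm ?_ (subset_hull_hitSet hu hb hσ _)⟩
  · rw [coe_closure_iSup hF]
    exact (IsSeparable.iUnion hsep).closure
  · refine hull_subset (Submodule.isClosed_topologicalClosure _) fun B hB => ?_
    obtain ⟨n, hn⟩ := exists_subset_hitSet ho hF hB
    refine (range_subset_hull hn).trans ((hstep n).trans ?_)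
    exact (le_iSup F (n + 1)).trans (Submodule.le_topologicalClosure _)

lemma IsProjSkeleton.isRichFamily_hullFamily (h : IsProjSkeleton P)
    {σ : Finset (ℕ × X) → Γ} (hσm : Monotone σ) {u : ℕ → X → Set X}
    (ho : ∀ n a, IsOpen (u n a)) (hu : ∀ n, ⋃ a, u n a = univ)
    (hf : ∀ n, LocallyFinite (u n)) (hb : ∀ n a, u n a ⊆ ball a (1 / ((n : ℝ) + 1)))
    (hσ : ∀ B : Finset (ℕ × X), ∀ i ∈ B, i.2 ∈ Set.range (P (σ B))) :
    IsRichFamily (hullFamily P σ u) := by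
  refine ⟨fun F hF => ⟨hF.2 ▸ isClosed_closure, hF.1⟩, fun S _ hS => ?_, fun F hF hm => ?_⟩
  · -- Iterate `F ↦ hull P σ (hitSet u F)`, starting from `S`.
    have hnext : ∀ G : {G : Submodule ℝ X // IsSeparable (G : Set X)},
        ∃ G' : {G : Submodule ℝ X // IsSeparable (G : Set X)},
          ((G' : Submodule ℝ X) : Set X) = hull P σ (hitSet u (G : Submodule ℝ X)) := by
      intro G
      obtain ⟨t, ht⟩ := h.exists_range_eq_hull hσm (hitSet_countable ho hf G.2)
      refine ⟨⟨LinearMap.range (P t : X →ₗ[ℝ] X), ?_⟩, ?_⟩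
      · rw [LinearMap.coe_range]
        exact h.separable_range t
      · rw [LinearMap.coe_range]
        exact ht
    choose next hnext using hnext
    let G : ℕ → {G : Submodule ℝ X // IsSeparable (G : Set X)} := fun n => next^[n] ⟨S, hS⟩
    have hG : ∀ n, ((G (n + 1) : Submodule ℝ X) : Set X)
        = hull P σ (hitSet u (G n : Submodule ℝ X)) := by
      intro n
      simp only [G, Function.iterate_succ_apply']
      exact hnext _
    have hGm : Monotone fun n => (G n : Submodule ℝ X) := monotone_nat_of_le_succ fun n => by
      intro x hx
      have := subset_hull_hitSet hu hb hσ ((G n : Submodule ℝ X) : Set X) hx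
      rwa [← hG n] at this
    refine ⟨_, closure_iSup_mem_hullFamily ho hu hb hσ hGm (fun n => (G n).2)
      (fun n => (hG n).superset), ?_⟩
    exact (le_iSup (fun n => (G n : Submodule ℝ X)) 0).trans (Submodule.le_topologicalClosure _)
  · refine closure_iSup_mem_hullFamily ho hu hb hσ hm (fun n => (hF n).1) fun n => ?_
    rw [(hF n).2]
    exact hm n.le_succ

/-- A skeleton has a rich family consisting of ranges of its projections. -/
lemma IsProjSkeleton.exists_isRichFamily (h : IsProjSkeleton P) :
    ∃ 𝓕 : Set (Submodule ℝ X), IsRichFamily 𝓕 ∧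
      ∀ F ∈ 𝓕, ∃ t, Set.range (P t) = (F : Set X) := by
  obtain ⟨u, ho, hu, hf, hb⟩ := exists_locallyFinite_covers X
  have hcov := h.covers
  choose m hm using hcov
  have : Nonempty Γ := ⟨m 0⟩
  obtain ⟨σ, hσm, hσ⟩ := exists_monotone_finset h.directed (fun i : ℕ × X => m i.2)
  refine ⟨hullFamily P σ u, h.isRichFamily_hullFamily hσm ho hu hf hb
    fun B i hi => h.range_mono (hσ B i hi) (hm i.2), fun F hF => ?_⟩
  obtain ⟨t, ht⟩ := h.exists_range_eq_hull hσm (hitSet_countable ho hf hF.1)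
  exact ⟨t, ht.trans hF.2⟩

end Rich

/-! ### From a simple skeleton to a skeleton -/

lemma IsRichFamily.exists_ge {𝓕 : Set (Submodule ℝ X)} (h : IsRichFamily 𝓕) {A : Set X}
    (hA : IsSeparable A) : ∃ F ∈ 𝓕, A ⊆ (F : Set X) := by
  obtain ⟨F, hF, hle⟩ := h.2.1 (Submodule.span ℝ A).topologicalClosure
    (Submodule.isClosed_topologicalClosure _)
    (by rw [Submodule.topologicalClosure_coe]; exact (hA.span (R := ℝ)).closure)
  exact ⟨F, hF, fun x hx => hle (Submodule.le_topologicalClosure _ (Submodule.subset_span hx))⟩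

lemma IsSimpleProjSkeleton.isProjSkeleton {𝓕 : Set (Submodule ℝ X)}
    {P : Submodule ℝ X → X →L[ℝ] X} (h : IsSimpleProjSkeleton 𝓕 P) :
    IsProjSkeleton fun F : 𝓕 => P F where
  directed E F := by
    obtain ⟨G, hG, hle⟩ := h.rich.exists_ge ((h.rich.1 E E.2).2.union (h.rich.1 F F.2).2)
    exact ⟨⟨G, hG⟩, subset_union_left.trans hle, subset_union_right.trans hle⟩
  separable_range F := by
    rw [h.range_eq F F.2]
    exact (h.rich.1 F F.2).2
  covers x := by
    obtain ⟨G, hG, hle⟩ := h.rich.exists_ge (finite_singleton x).countable.isSeparable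
    refine ⟨⟨G, hG⟩, ?_⟩
    rw [h.range_eq G hG]
    exact hle rfl
  comp_of_le E F hEF := h.comp_of_le E E.2 F F.2 hEF
  lub_of_strictMono s hs := by
    have hm : Monotone fun n => (s n : Submodule ℝ X) := fun m n hmn => hs.monotone hmn
    have hmem := h.rich.2.2 _ (fun n => (s n).2) hm
    refine ⟨⟨_, hmem⟩, ⟨?_, ?_⟩, ?_⟩
    · rintro _ ⟨n, rfl⟩
      exact (le_iSup (fun n => (s n : Submodule ℝ X)) n).trans
        (Submodule.le_topologicalClosure _)
    · intro G hG
      exact Submodule.topologicalClosure_minimal _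
        (iSup_le fun n => hG (mem_range_self n)) (h.rich.1 G G.2).1
    · rw [h.range_eq _ hmem, coe_closure_iSup hm]
      simp only [h.range_eq _ (s _).2]

end Aux

/-- Let `X` be a real Banach space and `D ⊆ X^*` an `r`-norming subspace
(`r ≥ 1`). Then `X` has a commutative `r`-projectional skeleton `𝔰` with `D(𝔰) = D` iff
`X` has a simple commutative `r`-projectional skeleton `𝔰'` with `D(𝔰') = D`. -/
theorem stmt1 {X : Type u} [NormedAddCommGroup X] [NormedSpace ℝ X] [CompleteSpace X]
    (r : ℝ) (hr : 1 ≤ r) (D : Submodule ℝ (X →L[ℝ] ℝ)) (hD : IsNormingSubspace r D) :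
    (∃ (Γ : Type u) (inst : PartialOrder Γ) (P : Γ → X →L[ℝ] X),
        @IsProjSkeleton X _ _ Γ inst P ∧ (∀ s, ‖P s‖ ≤ r) ∧
        (∀ s t : Γ, (P s).comp (P t) = (P t).comp (P s)) ∧
        skeletonDualSet P = (D : Set (X →L[ℝ] ℝ))) ↔
    (∃ (𝓕 : Set (Submodule ℝ X)) (P : Submodule ℝ X → X →L[ℝ] X),
        IsSimpleProjSkeleton 𝓕 P ∧ (∀ F ∈ 𝓕, ‖P F‖ ≤ r) ∧
        (∀ E ∈ 𝓕, ∀ F ∈ 𝓕, (P E).comp (P F) = (P F).comp (P E)) ∧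
        simpleDualSet 𝓕 P = (D : Set (X →L[ℝ] ℝ))) := by
  classical
  constructor
  · rintro ⟨Γ, inst, P, h, hn, hc, hDP⟩
    obtain ⟨𝓕, hrich, hran⟩ := h.exists_isRichFamily
    -- The value of `idx` outside `𝓕` is irrelevant.
    obtain ⟨idx, hidx⟩ : ∃ idx : Submodule ℝ X → Γ, ∀ F ∈ 𝓕,
        Set.range (P (idx F)) = (F : Set X) := by
      obtain ⟨s₀, -⟩ := h.covers 0
      exact ⟨fun F => if hF : F ∈ 𝓕 then (hran F hF).choose else s₀, fun F hF => by
        simp only [dif_pos hF]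
        exact (hran F hF).choose_spec⟩
    refine ⟨𝓕, fun F => P (idx F), ⟨hrich, hidx, fun E hE F hF hEF => ?_⟩, fun F _ => hn _,
      fun E _ F _ => hc _ _, ?_⟩
    · refine h.comp_of_range_subset hc ?_
      rw [hidx E hE, hidx F hF]
      exact hEF
    · rw [← hDP]
      apply subset_antisymm
      · refine iUnion₂_subset fun F _ => ?_
        exact subset_iUnion (fun s : Γ => Set.range fun f : X →L[ℝ] ℝ => f.comp (P s)) (idx F)
      · refine iUnion_subset fun s => ?_
        rintro _ ⟨f, rfl⟩
        obtain ⟨F, hF, hle⟩ := hrich.exists_ge (h.separable_range s)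
        refine mem_iUnion₂.2 ⟨F, hF, f.comp (P s), ?_⟩
        have hcomp := (h.comp_of_range_subset hc (hle.trans (hidx F hF).superset)).1
        change (f.comp (P s)).comp (P (idx F)) = f.comp (P s)
        rw [ContinuousLinearMap.comp_assoc, hcomp]
  · rintro ⟨𝓕, P, h, hn, hc, hDP⟩
    refine ⟨𝓕, inferInstance, fun F => P F, h.isProjSkeleton, fun F => hn F F.2,
      fun E F => hc E E.2 F F.2, ?_⟩
    rw [← hDP]
    exact (biUnion_eq_iUnion 𝓕 fun F _ => Set.range fun f : X →L[ℝ] ℝ => f.comp (P F)).symm
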